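/- Let n ≥ 4 and let u : ℝⁿ \ {0} → ℝ be a smooth function which is harmonic on ℝⁿ \ {0} (Δu = 0) and (-1)-homogeneous, i.e. λ u(λx) = u(x) for all λ > 0 and all x ≠ 0. Then u ≡ 0. (In particular, for n ≥ 4 a (-1)-homogeneous singularity of a harmonic function at the origin is removable only if the function vanishes.) -/

import Mathlib

/-!
Write `u = r⁻¹ f` with `f` a function on the unit sphere. Harmonicity becomes `Δ_S f = (n - 3) f`,
and since `n - 3 > 0` the maximum principle on the sphere excludes a positive maximum of `f`;
applied to `-u` it also excludes a negative minimum.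

The argument is carried out in Cartesian coordinates. If `M > 0` is the maximum of `u` on the unit
sphere, attained at `p`, then homogeneity gives `u x ≤ M / |x|` for all `x ≠ 0`, with equality at
`p`. Comparing second derivatives at `p` along the coordinate axes gives
`∂ⱼ∂ⱼ u p ≤ M (3 pⱼ² - 1)` (`pd_pd_le`), and summing over `j` gives `0 = Δ u p ≤ M (3 - n) < 0`.
-/

noncomputable section

/-- Partial derivative in the `j`-th coordinate direction. -/
def pd (n : ℕ) (f : (Fin n → ℝ) → ℝ) (j : Fin n) (x : Fin n → ℝ) : ℝ :=
  fderiv ℝ f x (Pi.single j 1)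

/-- Laplacian of a scalar function on `ℝⁿ`. -/
def lap (n : ℕ) (f : (Fin n → ℝ) → ℝ) (x : Fin n → ℝ) : ℝ :=
  ∑ j, pd n (pd n f j) j x

/-- Second-derivative test: at a local maximum the second derivative is nonpositive. -/
lemma second_deriv_nonpos_of_isLocalMax {h h' : ℝ → ℝ} {c a : ℝ}
    (h1 : ∀ᶠ t in nhds a, HasDerivAt h (h' t) t) (h2 : HasDerivAt h' c a)
    (hmax : IsLocalMax h a) : c ≤ 0 := by
  by_contra! hc
  have hd : deriv h =ᶠ[nhds a] h' := h1.mono fun t ht => ht.deriv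
  have hdd : deriv (deriv h) a = c := by rw [hd.deriv_eq, h2.deriv]
  have hmin : IsLocalMin h a :=
    isLocalMin_of_deriv_deriv_pos (by rw [hdd]; exact hc) hmax.deriv_eq_zero
      h1.self_of_nhds.continuousAt
  -- A local maximum that is also a local minimum makes `h` locally constant, so `c = 0`.
  have hconst : h =ᶠ[nhds a] fun _ => h a := by
    filter_upwards [hmin, hmax] with t ht1 ht2 using le_antisymm ht2 ht1
  have h0 : deriv h =ᶠ[nhds a] fun _ => (0 : ℝ) := by
    simpa using hconst.deriv
  have : deriv (deriv h) a = 0 := by rw [h0.deriv_eq]; simp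
  linarith

/-- If `u ≤ M / |x|` away from the origin, with equality at the unit vector `p`, then
`∂ⱼ∂ⱼ u p` is at most `∂ⱼ∂ⱼ (M / |x|)` at `p`, which is `M (3 pⱼ² - 1)`. -/
lemma pd_pd_le (n : ℕ) (u : (Fin n → ℝ) → ℝ) (hu : ContDiffOn ℝ (⊤ : ℕ∞) u {x | x ≠ 0})
    (M : ℝ) (p : Fin n → ℝ) (hp : ∑ i, p i ^ 2 = 1) (hup : u p = M)
    (hle : ∀ x : Fin n → ℝ, x ≠ 0 → u x ≤ M * (∑ i, x i ^ 2) ^ (-(1 / 2) : ℝ)) (j : Fin n) :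
    pd n (pd n u j) j p ≤ M * (3 * p j ^ 2 - 1) := by
  have hopen : IsOpen {x : Fin n → ℝ | x ≠ 0} := isOpen_ne
  have hp0 : p ≠ 0 := by
    rintro rfl
    simp at hp
  have hCD : ∀ x : Fin n → ℝ, x ≠ 0 → ContDiffAt ℝ (⊤ : ℕ∞) u x := fun x hx =>
    hu.contDiffAt (hopen.mem_nhds hx)
  set e : Fin n → ℝ := Pi.single j 1 with he
  have hline : ∀ t : ℝ, HasDerivAt (fun t : ℝ => p + t • e) e t := fun t => by
    simpa using ((hasDerivAt_id t).smul_const e).const_add p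
  have hne : ∀ᶠ t : ℝ in nhds 0, p + t • e ≠ 0 := by
    have : Filter.Tendsto (fun t : ℝ => p + t • e) (nhds 0) (nhds p) := by
      simpa using (hline 0).continuousAt.tendsto
    exact this.eventually (hopen.mem_nhds hp0)
  have hsq : ∀ t : ℝ, ∑ i, (p + t • e) i ^ 2 = 1 + 2 * p j * t + t ^ 2 := fun t => by
    have h1 : ∀ i, (p + t • e) i ^ 2 = p i ^ 2 + (2 * p i * t + t ^ 2) * e i := fun i => by
      by_cases hij : i = j
      · subst hij; simp [he]; ring
      · simp [he, hij]
    rw [Finset.sum_congr rfl fun i _ => h1 i, Finset.sum_add_distrib, hp]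
    simp [he, Pi.single_apply]
    ring
  have hqpos : ∀ᶠ t : ℝ in nhds 0, 0 < 1 + 2 * p j * t + t ^ 2 := by
    have hc : ContinuousAt (fun t : ℝ => 1 + 2 * p j * t + t ^ 2) 0 := by fun_prop
    exact hc.eventually (lt_mem_nhds (by norm_num))
  have hq : ∀ t : ℝ, HasDerivAt (fun t : ℝ => 1 + 2 * p j * t + t ^ 2) (2 * (p j + t)) t :=
    fun t => by
      have := (((hasDerivAt_id t).const_mul (2 * p j)).const_add 1).add ((hasDerivAt_id t).pow 2)
      refine this.congr_deriv ?_
      simp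
      ring
  have h1 : ∀ᶠ t : ℝ in nhds 0, HasDerivAt
      (fun t : ℝ => u (p + t • e) - M * (1 + 2 * p j * t + t ^ 2) ^ (-(1 / 2) : ℝ))
      (pd n u j (p + t • e) + M * ((p j + t) * (1 + 2 * p j * t + t ^ 2) ^ (-(3 / 2) : ℝ))) t := by
    filter_upwards [hne, hqpos] with t ht hqt
    have hd := ((hCD _ ht).differentiableAt (by simp)).hasFDerivAt.comp_hasDerivAt t (hline t)
    have hr := ((hq t).rpow_const (p := -(1 / 2)) (Or.inl hqt.ne')).const_mul M
    refine (hd.sub hr).congr_deriv ?_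
    rw [show (-(1 / 2) - 1 : ℝ) = -(3 / 2) by norm_num]
    simp only [pd, ← he]
    ring
  have h2 : HasDerivAt
      (fun t : ℝ => pd n u j (p + t • e)
        + M * ((p j + t) * (1 + 2 * p j * t + t ^ 2) ^ (-(3 / 2) : ℝ)))
      (pd n (pd n u j) j p + M * (1 - 3 * p j ^ 2)) 0 := by
    have hpd : DifferentiableAt ℝ (pd n u j) p := by
      have : ContDiffAt ℝ 1 (fderiv ℝ u) p :=
        (hCD p hp0).fderiv_right (WithTop.coe_le_coe.mpr le_top)
      exact (this.differentiableAt (by simp)).clm_apply (differentiableAt_const _)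
    have hpd' : HasFDerivAt (pd n u j) (fderiv ℝ (pd n u j) p) (p + (0 : ℝ) • e) := by
      simpa using hpd.hasFDerivAt
    have hd := hpd'.comp_hasDerivAt (0 : ℝ) (hline 0)
    have hr := (((hasDerivAt_id (0 : ℝ)).const_add (p j)).mul
      ((hq 0).rpow_const (p := -(3 / 2)) (Or.inl (by norm_num)))).const_mul M
    refine (hd.add hr).congr_deriv ?_
    simp only [pd, ← he, id, mul_zero, add_zero, ne_eq, OfNat.ofNat_ne_zero, not_false_eq_true,
      zero_pow, Real.one_rpow]
    ring
  have hmax : IsLocalMax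
      (fun t : ℝ => u (p + t • e) - M * (1 + 2 * p j * t + t ^ 2) ^ (-(1 / 2) : ℝ)) 0 := by
    filter_upwards [hne] with t ht
    have := hle _ ht
    rw [hsq] at this
    simp [hup]
    simpa using this
  have := second_deriv_nonpos_of_isLocalMax h1 h2 hmax
  linarith

lemma homogeneous_harmonic_nonpos
    (n : ℕ) (hn : 4 ≤ n)
    (u : (Fin n → ℝ) → ℝ)
    (hu : ContDiffOn ℝ (⊤ : ℕ∞) u {x | x ≠ 0})
    (hharm : ∀ x : Fin n → ℝ, x ≠ 0 → lap n u x = 0)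
    (hhom : ∀ l : ℝ, 0 < l → ∀ x : Fin n → ℝ, x ≠ 0 → l * u (l • x) = u x) :
    ∀ x : Fin n → ℝ, x ≠ 0 → u x ≤ 0 := by
  set S : Set (Fin n → ℝ) := {x | ∑ i, x i ^ 2 = 1} with hS
  have hS0 : ∀ x ∈ S, x ≠ 0 := by
    rintro x hx rfl
    simp [hS] at hx
  have hScomp : IsCompact S := by
    refine Metric.isCompact_of_isClosed_isBounded
      (isClosed_eq (by fun_prop) continuous_const)
      (Metric.isBounded_closedBall.subset (s := S) (t := Metric.closedBall 0 1) ?_)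
    intro x hx
    rw [mem_closedBall_zero_iff, pi_norm_le_iff_of_nonneg zero_le_one]
    intro i
    have h1 : x i ^ 2 ≤ 1 := by
      rw [← (show ∑ i, x i ^ 2 = 1 from hx)]
      exact Finset.single_le_sum (f := fun i => x i ^ 2) (fun i _ => sq_nonneg _)
        (Finset.mem_univ i)
    simpa [Real.norm_eq_abs] using h1
  have hpos : ∀ x : Fin n → ℝ, x ≠ 0 → 0 < ∑ i, x i ^ 2 := fun x hx => by
    obtain ⟨i, hi⟩ := Function.ne_iff.mp hx
    exact Finset.sum_pos' (fun i _ => sq_nonneg _) ⟨i, Finset.mem_univ i, by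
      have : x i ≠ 0 := hi
      positivity⟩
  have hnorm : ∀ x : Fin n → ℝ, x ≠ 0 →
      (∑ i, x i ^ 2) ^ (-(1 / 2) : ℝ) • x ∈ S := fun x hx => by
    have hp := hpos x hx
    simp only [hS, Set.mem_ofPred_eq, Pi.smul_apply, smul_eq_mul, mul_pow]
    rw [← Finset.mul_sum, ← Real.rpow_natCast, ← Real.rpow_mul hp.le]
    norm_num
    rw [Real.rpow_neg_one, inv_mul_cancel₀ hp.ne']
  intro x hx
  obtain ⟨p, hpS, hpmax⟩ := hScomp.exists_isMaxOn ⟨_, hnorm x hx⟩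
    (hu.continuousOn.mono hS0)
  have hle : ∀ y : Fin n → ℝ, y ≠ 0 → u y ≤ u p * (∑ i, y i ^ 2) ^ (-(1 / 2) : ℝ) := fun y hy => by
    have hl := Real.rpow_pos_of_pos (hpos y hy) (-(1 / 2))
    rw [← hhom _ hl y hy, mul_comm]
    exact mul_le_mul_of_nonneg_right (hpmax (hnorm y hy)) hl.le
  have hM : u p ≤ 0 := by
    by_contra! hM
    have hsum : lap n u p ≤ ∑ j, u p * (3 * p j ^ 2 - 1) :=
      Finset.sum_le_sum fun j _ => pd_pd_le n u hu (u p) p hpS rfl hle j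
    rw [hharm p (hS0 p hpS), ← Finset.mul_sum, Finset.sum_sub_distrib, ← Finset.mul_sum,
      show ∑ i, p i ^ 2 = 1 from hpS] at hsum
    simp only [Finset.sum_const, Finset.card_univ, Fintype.card_fin, nsmul_eq_mul] at hsum
    have hn' : (4 : ℝ) ≤ n := by exact_mod_cast hn
    nlinarith
  exact (hle x hx).trans
    (mul_nonpos_of_nonpos_of_nonneg hM (Real.rpow_pos_of_pos (hpos x hx) _).le)

theorem no_homogeneous_harmonic_dim_ge_four
    (n : ℕ) (hn : 4 ≤ n)
    (u : (Fin n → ℝ) → ℝ)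
    (hu : ContDiffOn ℝ (⊤ : ℕ∞) u {x | x ≠ 0})
    (hharm : ∀ x : Fin n → ℝ, x ≠ 0 → lap n u x = 0)
    (hhom : ∀ l : ℝ, 0 < l → ∀ x : Fin n → ℝ, x ≠ 0 → l * u (l • x) = u x) :
    ∀ x : Fin n → ℝ, x ≠ 0 → u x = 0 := by
  intro x hx
  refine le_antisymm (homogeneous_harmonic_nonpos n hn u hu hharm hhom x hx) ?_
  have hpd : ∀ (f : (Fin n → ℝ) → ℝ) j, pd n (-f) j = -pd n f j := fun f j => by
    funext y
    simp [pd, fderiv_neg]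
  have := homogeneous_harmonic_nonpos n hn (-u) hu.neg
    (fun y hy => by
      have := hharm y hy
      simp only [lap] at this
      simp [lap, hpd, this])
    (fun l hl y hy => by
      have := hhom l hl y hy
      simp only [Pi.neg_apply]
      linarith) x hx
  simpa using this
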